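/- Let m_b be a mass function on a finite nonempty set Θ, and let A ⊆ Θ be nonempty with A ≠ Θ. The minimal L_∞ distance from m_b to the affine subspace V_A of signed mass assignments supported in A and summing to 1 equals max_{C⊄A} m_b(C) when max_{C⊄A} m_b(C) ≥ (1/(2^{|A|}−1)) Σ_{C⊄A} m_b(C), and equals (1/(2^{|A|}−1)) Σ_{C⊄A} m_b(C) otherwise. -/

import Mathlib

open Finset

/-- The affine subspace `V_A` of signed mass assignments supported on nonempty subsets of `A`
and summing to 1. -/
def affineVA {Θ : Type*} [Fintype Θ] [DecidableEq Θ] (A : Finset Θ) :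
    Set (Finset Θ → ℝ) :=
  {α | α ∅ = 0 ∧ (∀ B : Finset Θ, ¬ B ⊆ A → α B = 0) ∧
    ∑ B ∈ A.powerset.filter (fun B => B ≠ ∅), α B = 1}

/-- The `L∞` distance between two mass vectors (indexed by the nonempty subsets of `Θ`). -/
noncomputable def dLinf {Θ : Type*} [Fintype Θ] [DecidableEq Θ] [Nonempty Θ]
    (α α' : Finset Θ → ℝ) : ℝ :=
  (Finset.univ.filter fun B : Finset Θ => B ≠ ∅).sup'
    (by
      obtain ⟨θ⟩ := ‹Nonempty Θ›
      exact ⟨{θ}, by simp⟩)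
    fun B => |α B - α' B|

/-- `max_{C ⊄ A} mb C`, well defined when `A ≠ Θ`. -/
noncomputable def maxOut {Θ : Type*} [Fintype Θ] [DecidableEq Θ]
    (mb : Finset Θ → ℝ) (A : Finset Θ) (h : A ≠ Finset.univ) : ℝ :=
  (Finset.univ.filter fun C : Finset Θ => ¬ C ⊆ A).sup'
    (by
      obtain ⟨θ, hθ⟩ : ∃ θ, θ ∉ A := by
        by_contra hc
        push_neg at hc
        exact h (Finset.eq_univ_iff_forall.mpr hc)
      exact ⟨{θ}, by simp [hθ]⟩)
    mb

/-- `∑_{C ⊄ A} mb C`. -/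
def sumOut {Θ : Type*} [Fintype Θ] [DecidableEq Θ] (mb : Finset Θ → ℝ) (A : Finset Θ) : ℝ :=
  ∑ C ∈ Finset.univ.filter (fun C : Finset Θ => ¬ C ⊆ A), mb C

/-!
Membership in `V_A` forces the coordinates outside `A` to vanish and constrains only the sum of
those inside `A`, so minimizing the sup distance splits into two independent problems. Outside `A`
the cost is the largest `|m C|`. Inside `A` the missing mass `1 - ∑ m B` has to be distributed over
the `2 ^ |A| - 1` nonempty subsets of `A`: by the triangle inequality the largest correction is at
least the average, and spreading the mass evenly attains it.
-/

theorem isLeast_of_exists_le_iff {P : Type*} [PartialOrder P] {D : Set P} {d : P}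
    (h : ∀ r, (∃ x ∈ D, x ≤ r) ↔ d ≤ r) : IsLeast D d := by
  have hlower : d ∈ lowerBounds D := fun x hx => (h x).1 ⟨x, hx, le_rfl⟩
  obtain ⟨x, hx, hxd⟩ := (h d).2 le_rfl
  exact ⟨hxd.antisymm (hlower hx) ▸ hx, hlower⟩

theorem cast_card_powerset_filter_ne_empty {ι R : Type*} [DecidableEq ι] [Ring R]
    (A : Finset ι) : (#{B ∈ A.powerset | B ≠ ∅} : R) = 2 ^ #A - 1 := by
  rw [filter_ne', card_erase_of_mem (empty_mem_powerset A), card_powerset,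
    Nat.cast_sub Nat.one_le_two_pow, Nat.cast_pow, Nat.cast_ofNat, Nat.cast_one]

section PrescribedSum

variable {ι 𝕜 : Type*} [Field 𝕜] [LinearOrder 𝕜] [IsStrictOrderedRing 𝕜]
  {s : Finset ι} {f g : ι → 𝕜} {r : 𝕜}

theorem abs_sum_sub_sum_div_card_le (hs : s.Nonempty) (h : ∀ i ∈ s, |f i - g i| ≤ r) :
    |∑ i ∈ s, g i - ∑ i ∈ s, f i| / #s ≤ r := by
  rw [div_le_iff₀' (by exact_mod_cast hs.card_pos), abs_sub_comm, ← sum_sub_distrib]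
  calc |∑ i ∈ s, (f i - g i)| ≤ ∑ i ∈ s, |f i - g i| := abs_sum_le_sum_abs _ _
    _ ≤ #s • r := sum_le_card_nsmul _ _ _ h
    _ = #s * r := nsmul_eq_mul _ _

theorem exists_sum_eq_abs_sub_eq (hs : s.Nonempty) (f : ι → 𝕜) (c : 𝕜) :
    ∃ g : ι → 𝕜, ∑ i ∈ s, g i = c ∧ ∀ i, |f i - g i| = |c - ∑ i ∈ s, f i| / #s := by
  refine ⟨fun i => f i + (c - ∑ j ∈ s, f j) / #s, ?_, fun i => ?_⟩
  · have hcard : (#s : 𝕜) ≠ 0 := by exact_mod_cast hs.card_pos.ne'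
    rw [sum_add_distrib, sum_const, nsmul_eq_mul, mul_div_cancel₀ _ hcard, add_sub_cancel]
  · rw [sub_add_cancel_left, abs_neg, abs_div, Nat.abs_cast]

theorem exists_sum_eq_abs_sub_le_iff (hs : s.Nonempty) {c : 𝕜} :
    (∃ g : ι → 𝕜, ∑ i ∈ s, g i = c ∧ ∀ i ∈ s, |f i - g i| ≤ r) ↔
      |c - ∑ i ∈ s, f i| / #s ≤ r := by
  constructor
  · rintro ⟨g, rfl, hg⟩
    exact abs_sum_sub_sum_div_card_le hs hg
  · intro hr
    obtain ⟨g, hsum, hg⟩ := exists_sum_eq_abs_sub_eq hs f c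
    exact ⟨g, hsum, fun i _ => (hg i).trans_le hr⟩

end PrescribedSum

section MassVectors

variable {Θ : Type*} [Fintype Θ] [DecidableEq Θ] {m : Finset Θ → ℝ} {A : Finset Θ} {r : ℝ}

theorem dLinf_le_iff [Nonempty Θ] {α : Finset Θ → ℝ} :
    dLinf m α ≤ r ↔ ∀ B, B ≠ ∅ → |m B - α B| ≤ r := by
  simp [dLinf]

theorem maxOut_le_iff {hA : A ≠ univ} : maxOut m A hA ≤ r ↔ ∀ C, ¬C ⊆ A → m C ≤ r := by
  simp [maxOut]

theorem sum_add_sumOut (hm : m ∅ = 0) (A : Finset Θ) :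
    ∑ B ∈ A.powerset with B ≠ ∅, m B + sumOut m A = ∑ B, m B := by
  have hsubset : ∑ B ∈ A.powerset with B ≠ ∅, m B = ∑ B with B ⊆ A, m B := by
    rw [filter_ne', sum_erase _ hm, filter_subset_univ]
  rw [hsubset, sumOut, sum_filter_add_sum_filter_not]

theorem exists_mem_affineVA_dLinf_le_iff [Nonempty Θ] :
    (∃ α ∈ affineVA A, dLinf m α ≤ r) ↔
      (∀ C, ¬C ⊆ A → |m C| ≤ r) ∧
        ∃ g : Finset Θ → ℝ, ∑ B ∈ A.powerset with B ≠ ∅, g B = 1 ∧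
          ∀ B ∈ A.powerset.filter (· ≠ ∅), |m B - g B| ≤ r := by
  simp only [dLinf_le_iff, mem_filter, mem_powerset]
  constructor
  · rintro ⟨α, ⟨-, hout, hsum⟩, hα⟩
    refine ⟨fun C hC => ?_, α, hsum, fun B hB => hα B hB.2⟩
    have hC0 : C ≠ ∅ := by
      rintro rfl
      exact hC (empty_subset A)
    simpa only [hout C hC, sub_zero] using hα C hC0
  · rintro ⟨hout, g, hsum, hg⟩
    let α : Finset Θ → ℝ := fun B => if B ⊆ A ∧ B ≠ ∅ then g B else 0
    have hα_in : ∀ B, B ⊆ A → B ≠ ∅ → α B = g B := fun B hBA hB => if_pos ⟨hBA, hB⟩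
    have hα_out : ∀ B, ¬B ⊆ A → α B = 0 := fun B hBA => if_neg fun h => hBA h.1
    have hα_sum : ∑ B ∈ A.powerset with B ≠ ∅, α B = 1 := by
      rw [← hsum]
      refine sum_congr rfl fun B hB => ?_
      rw [mem_filter, mem_powerset] at hB
      exact hα_in B hB.1 hB.2
    refine ⟨α, ⟨if_neg fun h => h.2 rfl, hα_out, hα_sum⟩, fun B hB => ?_⟩
    by_cases hBA : B ⊆ A
    · rw [hα_in B hBA hB]
      exact hg B ⟨hBA, hB⟩
    · rw [hα_out B hBA, sub_zero]
      exact hout B hBA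

end MassVectors

theorem stmt10_general {Θ : Type*} [Fintype Θ] [DecidableEq Θ] [Nonempty Θ]
    (m : Finset Θ → ℝ) {A : Finset Θ} (hA : A.Nonempty) (hAuniv : A ≠ univ) :
    IsLeast (dLinf m '' affineVA A)
      (max (maxOut |m| A hAuniv)
        (|1 - ∑ B ∈ A.powerset with B ≠ ∅, m B| / ((2 : ℝ) ^ #A - 1))) := by
  have hs : (A.powerset.filter (· ≠ ∅)).Nonempty :=
    ⟨A, mem_filter.2 ⟨mem_powerset_self A, hA.ne_empty⟩⟩
  refine isLeast_of_exists_le_iff fun r => ?_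
  rw [Set.exists_mem_image, exists_mem_affineVA_dLinf_le_iff, exists_sum_eq_abs_sub_le_iff hs,
    cast_card_powerset_filter_ne_empty, max_le_iff, maxOut_le_iff]
  simp only [Pi.abs_apply]

theorem isLeast_dLinf_image_affineVA {Θ : Type*} [Fintype Θ] [DecidableEq Θ] [Nonempty Θ]
    {m : Finset Θ → ℝ} (hm0 : m ∅ = 0) (hm : 0 ≤ m) (hsum : ∑ B, m B = 1) {A : Finset Θ}
    (hA : A.Nonempty) (hAuniv : A ≠ univ) :
    IsLeast (dLinf m '' affineVA A)
      (max (maxOut m A hAuniv) (sumOut m A / ((2 : ℝ) ^ #A - 1))) := by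
  have hmissing : 1 - ∑ B ∈ A.powerset with B ≠ ∅, m B = sumOut m A :=
    sub_eq_of_eq_add' (hsum ▸ (sum_add_sumOut hm0 A).symm)
  have hsumOut : 0 ≤ sumOut m A := sum_nonneg fun C _ => hm C
  simpa only [hmissing, abs_of_nonneg hm, abs_of_nonneg hsumOut] using stmt10_general m hA hAuniv

/-- the minimal `L∞` distance from `mb` to the affine subspace `V_A` equals
`max_{C⊄A} mb C` when `max_{C⊄A} mb C ≥ (∑_{C⊄A} mb C)/(2^{|A|}-1)`, and equals
`(∑_{C⊄A} mb C)/(2^{|A|}-1)` otherwise. -/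
theorem stmt10 {Θ : Type*} [Fintype Θ] [DecidableEq Θ] [Nonempty Θ]
    (mb : Finset Θ → ℝ)
    (hmb0 : mb ∅ = 0) (hmbnn : ∀ B, 0 ≤ mb B) (hmbsum : ∑ B : Finset Θ, mb B = 1)
    (A : Finset Θ) (hA : A.Nonempty) (hAuniv : A ≠ Finset.univ) :
    (sumOut mb A / ((2 : ℝ) ^ A.card - 1) ≤ maxOut mb A hAuniv →
      IsLeast (dLinf mb '' affineVA A) (maxOut mb A hAuniv)) ∧
    (maxOut mb A hAuniv < sumOut mb A / ((2 : ℝ) ^ A.card - 1) →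
      IsLeast (dLinf mb '' affineVA A) (sumOut mb A / ((2 : ℝ) ^ A.card - 1))) := by
  have h := isLeast_dLinf_image_affineVA hmb0 hmbnn hmbsum hA hAuniv
  exact ⟨fun hle => max_eq_left hle ▸ h, fun hlt => max_eq_right hlt.le ▸ h⟩
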